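/- Let d ∈ ℕ, let μ be a Borel probability measure on ℝ^d, let Π be a finite set of polynomials in ℝ[X_1, …, X_d] each of which (as a function on ℝ^d) is μ-integrable, and let ε > 0. Then there exists K̄ ∈ ℕ such that: (i) for every real K ≥ K̄ and every p ∈ Π, | ∫_{{y ∈ ℝ^d : max_i |y_i| ≤ K}} p dμ − ∫_{ℝ^d} p dμ | < ε; and (ii) there exists a natural number H ≥ K̄ such that for every lattice point a ∈ [−K̄, K̄)^d ∩ (1/H!)ℤ^d and every p ∈ Π, | ∫_{∏_{i=1}^d [a_i, a_i + 1/H!)} p dμ − p(a) · μ( ∏_{i=1}^d [a_i, a_i + 1/H!) ) | < ε. -/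

import Mathlib

open MeasureTheory Filter

theorem truncation_and_grid_approximation
    (d : ℕ) (μ : Measure (Fin d → ℝ)) [IsProbabilityMeasure μ]
    (Ps : Finset (MvPolynomial (Fin d) ℝ))
    (hint : ∀ p ∈ Ps, Integrable (fun y => MvPolynomial.eval y p) μ)
    (ε : ℝ) (hε : 0 < ε) :
    ∃ Kbar : ℕ,
      -- (i) truncation: for every K ≥ K̄ and every p ∈ Π
      (∀ K : ℝ, (Kbar : ℝ) ≤ K → ∀ p ∈ Ps,
        |(∫ y in {y : Fin d → ℝ | ∀ i', |y i'| ≤ K}, MvPolynomial.eval y p ∂μ) -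
          ∫ y, MvPolynomial.eval y p ∂μ| < ε) ∧
      -- (ii) grid approximation: there is H ≥ K̄ such that on every cell of the lattice
      -- [−K̄, K̄)^d ∩ (1/H!)ℤ^d the integral of p is within ε of p(a)·μ(cell)
      (∃ H : ℕ, Kbar ≤ H ∧
        ∀ a : Fin d → ℝ,
          (∀ i', a i' ∈ Set.Ico (-(Kbar : ℝ)) (Kbar : ℝ) ∧
            ∃ n : ℤ, a i' = (n : ℝ) / (H.factorial : ℝ)) →
          ∀ p ∈ Ps,
            |(∫ y in {y : Fin d → ℝ | ∀ i',
                y i' ∈ Set.Ico (a i') (a i' + 1 / (H.factorial : ℝ))},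
                MvPolynomial.eval y p ∂μ) -
              MvPolynomial.eval a p *
                (μ {y : Fin d → ℝ | ∀ i',
                  y i' ∈ Set.Ico (a i') (a i' + 1 / (H.factorial : ℝ))}).toReal| < ε) := by
  classical
  have hcont : ∀ p : MvPolynomial (Fin d) ℝ, Continuous (fun y => MvPolynomial.eval y p) :=
    fun p => MvPolynomial.continuous_eval p
  have hcov : AECover μ atTop (fun K : ℝ => {y : Fin d → ℝ | ∀ i', |y i'| ≤ K}) := by
    refine ⟨Eventually.of_forall fun y => ?_, fun K => ?_⟩
    · filter_upwards [eventually_ge_atTop ‖y‖] with K hK i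
      exact (norm_le_pi_norm y i).trans hK
    · have : IsClosed {y : Fin d → ℝ | ∀ i', |y i'| ≤ K} := by
        simp only [Set.setOf_forall]
        exact isClosed_iInter fun i => isClosed_le (by fun_prop) continuous_const
      exact this.measurableSet
  have h1 : ∀ᶠ K : ℝ in atTop, ∀ p ∈ Ps,
        |(∫ y in {y : Fin d → ℝ | ∀ i', |y i'| ≤ K}, MvPolynomial.eval y p ∂μ) -
          ∫ y, MvPolynomial.eval y p ∂μ| < ε := by
    rw [Filter.eventually_all_finset]
    intro p hp
    have := hcov.integral_tendsto_of_countably_generated (hint p hp)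
    have := (Metric.tendsto_nhds.1 this) ε hε
    simpa only [Real.dist_eq] using this
  obtain ⟨K0, hK0⟩ := eventually_atTop.1 h1
  obtain ⟨N, hN⟩ := exists_nat_ge K0
  refine ⟨N, fun K hK => hK0 K (hN.trans hK), ?_⟩
  have hfac : Tendsto (fun H : ℕ => 1 / (H.factorial : ℝ)) atTop (nhds 0) := by
    have := FloorSemiring.tendsto_pow_div_factorial_atTop (1 : ℝ)
    simpa using this
  have h2 : ∀ᶠ H : ℕ in atTop, ∀ p ∈ Ps, ∀ a y : Fin d → ℝ,
      (∀ i, a i ∈ Set.Ico (-(N : ℝ)) (N : ℝ)) →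
      (∀ i, y i ∈ Set.Ico (a i) (a i + 1 / (H.factorial : ℝ))) →
      |MvPolynomial.eval y p - MvPolynomial.eval a p| ≤ ε / 2 := by
    rw [Filter.eventually_all_finset]
    intro p hp
    have huc := (isCompact_closedBall (0 : Fin d → ℝ) ((N : ℝ) + 1)).uniformContinuousOn_of_continuous
      (hcont p).continuousOn
    obtain ⟨δ, hδ, huc⟩ := Metric.uniformContinuousOn_iff.1 huc (ε / 2) (half_pos hε)
    filter_upwards [hfac.eventually (gt_mem_nhds hδ)] with H hH a y ha hy
    have hH1 : 1 / (H.factorial : ℝ) ≤ 1 := by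
      rw [div_le_one (by positivity)]
      exact_mod_cast H.factorial_pos
    have hN0 : (0 : ℝ) ≤ (N : ℝ) + 1 := by positivity
    refine (huc y ?_ a ?_ ?_).le
    · rw [mem_closedBall_zero_iff, pi_norm_le_iff_of_nonneg hN0]
      intro i
      obtain ⟨u, v⟩ := ha i
      obtain ⟨s, t⟩ := hy i
      rw [Real.norm_eq_abs, abs_le]
      constructor <;> linarith
    · rw [mem_closedBall_zero_iff, pi_norm_le_iff_of_nonneg hN0]
      intro i
      obtain ⟨u, v⟩ := ha i
      rw [Real.norm_eq_abs, abs_le]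
      constructor <;> linarith
    · rw [dist_pi_lt_iff hδ]
      intro i
      obtain ⟨s, t⟩ := hy i
      rw [Real.dist_eq, abs_lt]
      constructor <;> linarith
  obtain ⟨H, hH, hNH⟩ := (h2.and (eventually_ge_atTop N)).exists
  refine ⟨H, hNH, fun a ha p hp => ?_⟩
  set S := {y : Fin d → ℝ | ∀ i', y i' ∈ Set.Ico (a i') (a i' + 1 / (H.factorial : ℝ))} with hS
  have hbd : ∀ y ∈ S, ‖MvPolynomial.eval y p - MvPolynomial.eval a p‖ ≤ ε / 2 :=
    fun y hy => hH p hp a y (fun i => (ha i).1) hy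
  have heq : (∫ y in S, MvPolynomial.eval y p ∂μ) - MvPolynomial.eval a p * (μ S).toReal
      = ∫ y in S, (MvPolynomial.eval y p - MvPolynomial.eval a p) ∂μ := by
    rw [integral_sub (hint p hp).integrableOn (integrable_const _), setIntegral_const,
      smul_eq_mul, mul_comm]
    rfl
  rw [heq]
  have h3 := norm_setIntegral_le_of_norm_le_const (measure_lt_top μ S) hbd
  have h4 : μ.real S ≤ 1 := measureReal_le_one
  rw [Real.norm_eq_abs] at h3
  nlinarith
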